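/- The linear automorphism group Lin(Z²⁰ + F₂₀(X,Y)) ⊆ PGL(3,ℂ) of the smooth plane curve C₂₀ : Z²⁰ + F₂₀(X,Y) = 0 has order 1200 = 60·20, and there exists a group homomorphism φ : ℤ/2 → Aut(SL(2,5)) such that this group is isomorphic to ℤ/5 × (SL(2,5) ⋊_φ ℤ/2). -/

import Mathlib

noncomputable section
open Matrix MvPolynomial

/-- The subgroup of nonzero scalar matrices in `GL(3, ℂ)`. -/
def scalarSub : Subgroup (GL (Fin 3) ℂ) :=
  (Units.map (algebraMap ℂ (Matrix (Fin 3) (Fin 3) ℂ)).toMonoidHom).range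

instance : scalarSub.Normal := by
  constructor
  rintro n ⟨c, rfl⟩ g
  refine ⟨c, ?_⟩
  ext
  simp only [Units.coe_map, RingHom.toMonoidHom_eq_coe, MonoidHom.coe_coe, Units.val_mul]
  rw [← Algebra.commutes (↑c : ℂ) (↑g : Matrix (Fin 3) (Fin 3) ℂ), mul_assoc,
    ← Units.val_mul, mul_inv_cancel, Units.val_one, mul_one]

/-- `PGL(3, ℂ)`: the quotient of `GL(3, ℂ)` by the nonzero scalar matrices. -/
abbrev PGL3 := GL (Fin 3) ℂ ⧸ scalarSub

/-- `g` maps the zero set of `F` in `ℂ³` onto itself. -/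
def Preserves (F : MvPolynomial (Fin 3) ℂ) (g : GL (Fin 3) ℂ) : Prop :=
  (fun v => (g : Matrix (Fin 3) (Fin 3) ℂ).mulVec v) '' {v : Fin 3 → ℂ | eval v F = 0}
    = {v : Fin 3 → ℂ | eval v F = 0}

/-- The subgroup of `GL(3, ℂ)` of matrices mapping the zero set of `F` onto itself. -/
def LinGL (F : MvPolynomial (Fin 3) ℂ) : Subgroup (GL (Fin 3) ℂ) where
  carrier := {g | Preserves F g}
  one_mem' := by
    show Preserves F 1
    unfold Preserves
    simp [Matrix.one_mulVec]
  mul_mem' := by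
    intro a b ha hb
    show Preserves F (a * b)
    unfold Preserves at *
    have h : (fun v => ((a * b : GL (Fin 3) ℂ) : Matrix (Fin 3) (Fin 3) ℂ).mulVec v)
        = (fun v => (a : Matrix (Fin 3) (Fin 3) ℂ).mulVec v) ∘
          (fun v => (b : Matrix (Fin 3) (Fin 3) ℂ).mulVec v) := by
      funext v
      simp [Matrix.mulVec_mulVec]
    rw [h, Set.image_comp, hb, ha]
  inv_mem' := by
    intro a ha
    show Preserves F a⁻¹
    unfold Preserves at *
    conv_lhs => rw [← ha, ← Set.image_comp]
    have h : ((fun v => ((a⁻¹ : GL (Fin 3) ℂ) : Matrix (Fin 3) (Fin 3) ℂ).mulVec v) ∘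
        (fun v => (a : Matrix (Fin 3) (Fin 3) ℂ).mulVec v)) = id := by
      funext v
      rw [Function.comp_apply, Matrix.mulVec_mulVec, ← Units.val_mul, inv_mul_cancel,
        Units.val_one, Matrix.one_mulVec, id_eq]
    rw [h, Set.image_id]

/-- The linear automorphism group `Lin(F) ⊆ PGL(3, ℂ)`:
classes of matrices mapping the zero set of `F` onto itself. -/
def Lin (F : MvPolynomial (Fin 3) ℂ) : Subgroup PGL3 :=
  (LinGL F).map (QuotientGroup.mk' scalarSub)

/-- `G = Z²⁰ + F₂₀(X, Y)` with `X = X 0`, `Y = X 1`, `Z = X 2`. -/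
def G20 : MvPolynomial (Fin 3) ℂ :=
  X 2 ^ 20 +
    (X 0 ^ 20 - 228 * (X 0 ^ 15 * X 1 ^ 5 - X 0 ^ 5 * X 1 ^ 15)
      + 494 * X 0 ^ 10 * X 1 ^ 10 + X 1 ^ 20)

/-!
The zero set of the squarefree form `G20` determines `G20` up to a scalar, so a matrix `A` in
`LinGL G20` satisfies `G20 ∘ A = c • G20` and preserves the points at which the Hessian matrix of
`G20` has rank at most one. Klein's identity `Hess F₂₀ = -1732800 f³`, where `f` is the form of
degree 12 of the vertices of the icosahedron, shows that these points are the `Z`-axis and twelve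
lines in the plane `Z = 0`. Hence, up to a scalar, `A = B ⊕ (1)` with `B` preserving `F₂₀` and
mapping the vertex `(1 : 0)` to a vertex.

Klein's generators satisfy Steinberg's relations, which by the Bruhat normal form define a faithful
representation `ρ` of `SL(2, 5)`. Its image preserves `F₂₀` and is transitive on the vertices, and a
matrix preserving `F₂₀` and fixing `(1 : 0)` is diagonal. So `B` ranges over `μ₂₀ ρ(SL(2, 5))`.
Finally `i ρ(diag(2, 1/2))` is an involution of determinant `-1`, which splits `ρ(SL(2, 5))` off
from `μ₄ ρ(SL(2, 5))`, while `μ₂₀ = μ₅ × μ₄`.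
-/

section LinearSubstitution

variable {σ R : Type*} [Fintype σ] [CommSemiring R]

/-- The linear substitution `p ↦ p ∘ A`, which replaces the variable `X i` by `∑ j, A i j X j`. -/
def linSubst (A : Matrix σ σ R) : MvPolynomial σ R →ₐ[R] MvPolynomial σ R :=
  aeval fun i => ∑ j, C (A i j) * X j

lemma linSubst_X (A : Matrix σ σ R) (i : σ) : linSubst A (X i) = ∑ j, C (A i j) * X j :=
  aeval_X _ _

lemma eval_linSubst (A : Matrix σ σ R) (p : MvPolynomial σ R) (v : σ → R) :
    eval v (linSubst A p) = eval (A *ᵥ v) p := by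
  induction p using MvPolynomial.induction_on with
  | C a => simp only [algHom_C, algebraMap_eq, eval_C]
  | add p q hp hq => simp only [map_add, hp, hq]
  | mul_X p k hp =>
    simp only [map_mul, hp, linSubst_X, map_sum, eval_C, eval_X, mulVec, dotProduct]

lemma totalDegree_linSubst_le (A : Matrix σ σ R) (p : MvPolynomial σ R) :
    (linSubst A p).totalDegree ≤ p.totalDegree := by
  have linear (i : σ) : (∑ j, C (A i j) * X j : MvPolynomial σ R).totalDegree ≤ 1 :=
    totalDegree_finsetSum_le fun j _ =>
      (isHomogeneous_C_mul_X (A i j) j).totalDegree_le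
  rw [linSubst, aeval_def, eval₂_eq]
  refine totalDegree_finsetSum_le fun d hd => ?_
  calc (algebraMap R (MvPolynomial σ R) (coeff d p) *
        ∏ i ∈ d.support, (∑ j, C (A i j) * X j) ^ d i).totalDegree
      ≤ 0 + ∑ i ∈ d.support, d i := by
        refine (totalDegree_mul _ _).trans (add_le_add (totalDegree_C _).le ?_)
        refine (totalDegree_finsetProd _ _).trans (Finset.sum_le_sum fun i _ => ?_)
        exact (totalDegree_pow _ _).trans (by simpa using Nat.mul_le_mul_left (d i) (linear i))
    _ ≤ p.totalDegree := by simpa [Finsupp.sum] using le_totalDegree hd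

lemma pderiv_linSubst (A : Matrix σ σ R) (p : MvPolynomial σ R) (j : σ) :
    pderiv j (linSubst A p) = ∑ i, C (A i j) * linSubst A (pderiv i p) := by
  classical
  induction p using MvPolynomial.induction_on with
  | C a => simp only [algHom_C, algebraMap_eq, pderiv_C, map_zero, mul_zero, Finset.sum_const_zero]
  | add p q hp hq => simp only [map_add, hp, hq, mul_add, Finset.sum_add_distrib]
  | mul_X p k hp =>
    have linear : pderiv j (linSubst A (X k)) = C (A k j) := by
      simp [linSubst_X, pderiv_X, Pi.single_apply]
    have basis (i : σ) : linSubst A (pderiv i (X k)) = if k = i then 1 else 0 := by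
      rw [pderiv_X, Pi.single_apply]; split_ifs <;> simp_all
    simp only [map_mul, map_add, pderiv_mul, hp, linear, basis, mul_add, Finset.sum_add_distrib,
      Finset.sum_mul]
    simp [mul_left_comm, mul_comm]

end LinearSubstitution

section Nullstellensatz

variable {σ k : Type*} [Field k] [IsAlgClosed k]

lemma dvd_of_squarefree_of_eval_eq_zero [Finite σ] {F p : MvPolynomial σ k} (hF : Squarefree F)
    (hp : ∀ v, eval v F = 0 → eval v p = 0) : F ∣ p := by
  have radical : (Ideal.span {F}).IsRadical :=
    isRadical_iff_span_singleton.mp hF.isRadical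
  rw [← Ideal.mem_span_singleton, ← radical.radical, ← vanishingIdeal_zeroLocus_eq_radical (K := k)]
  intro v hv
  simpa using hp v (by simpa using hv F (Ideal.mem_span_singleton_self F))

lemma exists_linSubst_eq_C_mul [Fintype σ] {F : MvPolynomial σ k} (hF : Squarefree F)
    (A : Matrix σ σ k) (hA : ∀ v, eval v F = 0 → eval (A *ᵥ v) F = 0) :
    ∃ c, linSubst A F = C c * F := by
  obtain ⟨q, hq⟩ : F ∣ linSubst A F :=
    dvd_of_squarefree_of_eval_eq_zero hF fun v hv => by rw [eval_linSubst, hA v hv]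
  by_cases hq0 : q = 0
  · exact ⟨0, by rw [hq, hq0, mul_zero, C_0, zero_mul]⟩
  have degree := totalDegree_linSubst_le A F
  rw [hq, totalDegree_mul_of_isDomain hF.ne_zero hq0] at degree
  obtain ⟨c, rfl⟩ : ∃ c, q = C c := ⟨_, totalDegree_eq_zero_iff_eq_C.mp (by lia)⟩
  exact ⟨c, by rw [hq, mul_comm]⟩

end Nullstellensatz

section Hessian

variable {σ R : Type*} [Fintype σ] [CommRing R]

/-- The Hessian matrix of the polynomial `p` at the point `v`. -/
def hessianAt (p : MvPolynomial σ R) (v : σ → R) : Matrix σ σ R :=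
  of fun i j => eval v (pderiv i (pderiv j p))

lemma hessianAt_linSubst (A : Matrix σ σ R) (p : MvPolynomial σ R) (v : σ → R) :
    hessianAt (linSubst A p) v = Aᵀ * hessianAt p (A *ᵥ v) * A := by
  ext i j
  simp only [hessianAt, of_apply, pderiv_linSubst, map_sum, pderiv_C_mul, map_mul, eval_C,
    eval_linSubst, Matrix.mul_apply, transpose_apply, Finset.sum_mul, Finset.mul_sum]
  exact Finset.sum_congr rfl fun l _ => Finset.sum_congr rfl fun m _ => by ring

lemma adjugate_hessianAt_mulVec_eq_zero [DecidableEq σ] {A : Matrix σ σ R}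
    {F : MvPolynomial σ R} {c : R} {v : σ → R} (hA : IsUnit A.det) (hF : linSubst A F = C c * F)
    (hv : (hessianAt F v).adjugate = 0) : (hessianAt F (A *ᵥ v)).adjugate = 0 := by
  have transform : Aᵀ * hessianAt F (A *ᵥ v) * A = c • hessianAt F v := by
    rw [← hessianAt_linSubst, hF]
    ext i j
    simp [hessianAt]
  have conjugated : A.adjugate * (hessianAt F (A *ᵥ v)).adjugate * (A.adjugate)ᵀ = 0 := by
    rw [adjugate_transpose, mul_assoc, ← adjugate_mul_distrib, ← adjugate_mul_distrib, transform,
      adjugate_smul, hv, smul_zero]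
  have unit : IsUnit A.adjugate := by
    rw [isUnit_iff_isUnit_det, det_adjugate]; exact hA.pow _
  have unitT : IsUnit (A.adjugate)ᵀ := by
    rw [isUnit_iff_isUnit_det, det_transpose, ← isUnit_iff_isUnit_det]; exact unit
  rwa [unitT.mul_left_eq_zero, unit.mul_right_eq_zero] at conjugated

end Hessian

lemma pderiv_ofNat {σ R : Type*} [CommSemiring R] (n : ℕ) [n.AtLeastTwo] (i : σ) :
    pderiv i (OfNat.ofNat n : MvPolynomial σ R) = 0 :=
  Derivation.map_natCast _ n

section BlockSum

variable {R : Type*} [CommRing R]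

/-- The block diagonal matrix `B ⊕ (c)`. -/
def blockSum (B : Matrix (Fin 2) (Fin 2) R) (c : R) : Matrix (Fin 3) (Fin 3) R :=
  !![B 0 0, B 0 1, 0; B 1 0, B 1 1, 0; 0, 0, c]

lemma blockSum_mulVec (B : Matrix (Fin 2) (Fin 2) R) (c : R) (v : Fin 3 → R) :
    blockSum B c *ᵥ v = ![(B *ᵥ ![v 0, v 1]) 0, (B *ᵥ ![v 0, v 1]) 1, c * v 2] := by
  ext i
  fin_cases i <;> simp [blockSum, mulVec, dotProduct, Fin.sum_univ_three]

lemma blockSum_mul (B B' : Matrix (Fin 2) (Fin 2) R) (c c' : R) :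
    blockSum (B * B') (c * c') = blockSum B c * blockSum B' c' := by
  ext i j
  fin_cases i <;> fin_cases j <;> simp [blockSum, Matrix.mul_apply, Fin.sum_univ_succ]

lemma det_blockSum (B : Matrix (Fin 2) (Fin 2) R) (c : R) : (blockSum B c).det = B.det * c := by
  simp only [blockSum, det_fin_three, det_fin_two, of_apply, cons_val]
  ring

lemma adjugate_blockSum_eq_zero_iff [IsDomain R] {B : Matrix (Fin 2) (Fin 2) R} {c : R} :
    (blockSum B c).adjugate = 0 ↔ B.det = 0 ∧ (c = 0 ∨ B = 0) := by
  rw [blockSum, adjugate_fin_three_of, det_fin_two, ← Matrix.ext_iff, ← Matrix.ext_iff]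
  simp only [Fin.forall_fin_succ, of_apply, cons_val', cons_val_fin_one, cons_val_zero,
    cons_val_succ, Matrix.zero_apply, mul_zero, zero_mul, sub_zero, add_zero, sub_self, neg_zero,
    mul_eq_zero, neg_eq_zero, forall_const, and_true, true_and, Fin.succ_zero_eq_one,
    IsEmpty.forall_iff]
  grind

end BlockSum

section BinaryForms

variable {R : Type*} [CommRing R]

/-- Klein's binary form of degree 20, whose zeros are the face centres of the icosahedron. -/
def faceForm (x y : R) : R :=
  x ^ 20 - 228 * (x ^ 15 * y ^ 5 - x ^ 5 * y ^ 15) + 494 * x ^ 10 * y ^ 10 + y ^ 20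

/-- Klein's binary form of degree 12, whose zeros are the vertices of the icosahedron. -/
def vertexForm (x y : R) : R :=
  x * y * (x ^ 10 + 11 * x ^ 5 * y ^ 5 - y ^ 10)

/-- The Hessian matrix of `faceForm`. -/
def faceHessian (x y : R) : Matrix (Fin 2) (Fin 2) R :=
  !![380 * x ^ 18 - 228 * (210 * x ^ 13 * y ^ 5 - 20 * x ^ 3 * y ^ 15) + 44460 * x ^ 8 * y ^ 10,
      -17100 * (x ^ 14 * y ^ 4 - x ^ 4 * y ^ 14) + 49400 * x ^ 9 * y ^ 9;
    -17100 * (x ^ 14 * y ^ 4 - x ^ 4 * y ^ 14) + 49400 * x ^ 9 * y ^ 9,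
      380 * y ^ 18 - 228 * (20 * x ^ 15 * y ^ 3 - 210 * x ^ 5 * y ^ 13) + 44460 * x ^ 10 * y ^ 8]

lemma det_faceHessian (x y : R) : (faceHessian x y).det = -1732800 * vertexForm x y ^ 3 := by
  simp only [faceHessian, vertexForm, det_fin_two_of]
  ring

lemma euler_faceHessian (x y : R) :
    ![x, y] ⬝ᵥ faceHessian x y *ᵥ ![x, y] = 380 * faceForm x y := by
  simp only [faceHessian, faceForm, dotProduct, mulVec, Fin.sum_univ_two, of_apply, cons_val_zero,
    cons_val_one]
  ring

lemma faceForm_smul (c x y : R) : faceForm (c * x) (c * y) = c ^ 20 * faceForm x y := by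
  simp only [faceForm]
  ring

lemma vertexForm_smul (c x y : R) : vertexForm (c * x) (c * y) = c ^ 12 * vertexForm x y := by
  simp only [vertexForm]
  ring

lemma eval_G20 (v : Fin 3 → ℂ) : eval v G20 = v 2 ^ 20 + faceForm (v 0) (v 1) := by
  simp [G20, faceForm]

lemma hessianAt_G20 (v : Fin 3 → ℂ) : hessianAt G20 v =
    blockSum (faceHessian (v 0) (v 1)) (380 * v 2 ^ 18) := by
  ext i j
  fin_cases i <;> fin_cases j <;>
    simp [hessianAt, G20, faceHessian, blockSum, pderiv_X, pderiv_ofNat (R := ℂ)] <;> ring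

lemma eq_zero_of_vertexForm_eq_zero_of_faceForm_eq_zero {K : Type*} [Field K] [CharZero K]
    {x y : K} (hf : vertexForm x y = 0) (hF : faceForm x y = 0) : x = 0 ∧ y = 0 := by
  have edge : x = 0 ∨ y = 0 → x = 0 ∧ y = 0 := by
    rintro (rfl | rfl) <;> simpa [faceForm] using hF
  simp only [vertexForm, mul_eq_zero, or_assoc] at hf
  rcases hf with hx | hy | hq
  · exact edge (.inl hx)
  · exact edge (.inr hy)
  have remainder : 3125 * (y ^ 15 * (y ^ 5 - 11 * x ^ 5)) = 0 := by
    rw [← hF, faceForm]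
    linear_combination (-x ^ 10 + 239 * x ^ 5 * y ^ 5 - 3124 * y ^ 10) * hq
  simp only [mul_eq_zero, OfNat.ofNat_ne_zero, false_or, pow_eq_zero_iff, ne_eq,
    not_false_eq_true, sub_eq_zero] at remainder
  rcases remainder with hy | hxy
  · exact edge (.inr hy)
  · refine edge (.inl (pow_eq_zero_iff (n := 10) (by norm_num) |>.mp ?_))
    linear_combination hq + (y ^ 5) * hxy

/-- The points at which the Hessian matrix of `G20` has rank at most one: the `Z`-axis, and the
vertices of the icosahedron in the plane `Z = 0`. -/
def hessianLocus : Set (Fin 3 → ℂ) :=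
  {v | (v 0 = 0 ∧ v 1 = 0) ∨ (v 2 = 0 ∧ vertexForm (v 0) (v 1) = 0)}

lemma adjugate_hessianAt_G20_eq_zero_iff (v : Fin 3 → ℂ) :
    (hessianAt G20 v).adjugate = 0 ↔ v ∈ hessianLocus := by
  set H := faceHessian (v 0) (v 1) with hH
  have minors : (hessianAt G20 v).adjugate = 0 ↔ H.det = 0 ∧ (v 2 = 0 ∨ H = 0) := by
    simp [hessianAt_G20, adjugate_blockSum_eq_zero_iff, hH]
  have face_of_eq_zero (h : H = 0) : faceForm (v 0) (v 1) = 0 := by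
    simpa [← hH, h] using (euler_faceHessian (v 0) (v 1)).symm
  have det_iff : H.det = 0 ↔ vertexForm (v 0) (v 1) = 0 := by
    simp [hH, det_faceHessian]
  rw [minors, det_iff]
  constructor
  · rintro ⟨hf, hz | h⟩
    · exact .inr ⟨hz, hf⟩
    · exact .inl (eq_zero_of_vertexForm_eq_zero_of_faceForm_eq_zero hf (face_of_eq_zero h))
  · rintro (⟨hx, hy⟩ | ⟨hz, hf⟩)
    · refine ⟨by simp [vertexForm, hx], .inr ?_⟩
      ext i j
      fin_cases i <;> fin_cases j <;> simp [hH, faceHessian, hx, hy]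
    · exact ⟨hf, .inl hz⟩

end BinaryForms

section Bruhat

open scoped MatrixGroups

/-- Elements `U b`, `H a` and `W` of a monoid satisfying Steinberg's relations between the upper
unipotent matrices, the diagonal matrices and the Weyl element of `SL(2, K)`. -/
structure SteinbergTriple (K M : Type*) [Field K] [Monoid M] where
  U : AddChar K M
  H : Kˣ →* M
  W : M
  H_mul_U (a : Kˣ) (b : K) : H a * U b = U (a ^ 2 * b) * H a
  W_mul_H (a : Kˣ) : W * H a = H a⁻¹ * W
  W_mul_W : W * W = H (-1)
  W_mul_U_mul_W (t : Kˣ) :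
    W * U t * W = U (-(t⁻¹ : Kˣ)) * W * H t * U (-(t⁻¹ : Kˣ))

lemma W_mul_U_mul_W_of_sq_mul {K M : Type*} [Field K] [Monoid M] {U : AddChar K M} {H : Kˣ →* M}
    {W : M} (H_mul_U : ∀ a b, H a * U b = U ((a : K) ^ 2 * b) * H a)
    (W_mul_H : ∀ a, W * H a = H a⁻¹ * W) {t : Kˣ}
    (ht : W * U t * W = U (-(t⁻¹ : Kˣ)) * W * H t * U (-(t⁻¹ : Kˣ))) (a : Kˣ) :
    W * U (a ^ 2 * t : Kˣ) * W =
      U (-((a ^ 2 * t)⁻¹ : Kˣ)) * W * H (a ^ 2 * t) * U (-((a ^ 2 * t)⁻¹ : Kˣ)) := by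
  have scale : (-((a ^ 2 * t)⁻¹ : Kˣ) : K) = (a⁻¹ : Kˣ) ^ 2 * -(t⁻¹ : Kˣ) := by
    push_cast
    ring
  have U_mul_H (b : K) : U b * H a = H a * U ((a⁻¹ : Kˣ) ^ 2 * b) := by
    rw [H_mul_U, ← mul_assoc, ← mul_pow, ← Units.val_mul, mul_inv_cancel, Units.val_one, one_pow,
      one_mul]
  calc W * U (a ^ 2 * t : Kˣ) * W
      = W * (U ((a : K) ^ 2 * t) * H a) * (H a⁻¹ * W) := by
        rw [mul_assoc W, ← mul_assoc (W * _) (H a⁻¹), mul_assoc W, mul_assoc (U _), ← map_mul H,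
          mul_inv_cancel, map_one, mul_one, Units.val_mul, Units.val_pow_eq_pow_val, mul_assoc]
    _ = W * H a * U t * (W * H a) := by rw [← H_mul_U, ← W_mul_H, ← mul_assoc W]
    _ = H a⁻¹ * (W * U t * W) * H a := by rw [W_mul_H]; simp only [mul_assoc, W_mul_H]
    _ = (H a⁻¹ * U (-(t⁻¹ : Kˣ))) * W * H t * (U (-(t⁻¹ : Kˣ)) * H a) := by
        rw [ht]; simp only [mul_assoc]
    _ = U (-((a ^ 2 * t)⁻¹ : Kˣ)) * (H a⁻¹ * W) * (H t * H a) * U (-((a ^ 2 * t)⁻¹ : Kˣ)) := by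
        rw [U_mul_H, H_mul_U, ← scale]; simp only [mul_assoc]
    _ = U (-((a ^ 2 * t)⁻¹ : Kˣ)) * W * H (a ^ 2 * t) * U (-((a ^ 2 * t)⁻¹ : Kˣ)) := by
        rw [← W_mul_H, ← map_mul, ← mul_assoc, mul_assoc _ (H a), ← map_mul, sq, mul_comm t,
          mul_assoc a]

namespace SteinbergTriple

variable {K M : Type*} [Field K] [Monoid M] (S : SteinbergTriple K M)

/-- The elements of the Borel subgroup, in normal form. -/
def borel (b : K) (a : Kˣ) : M := S.U b * S.H a

/-- The elements of the big Bruhat cell, in normal form. -/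
def cell (b : K) (a : Kˣ) (d : K) : M := S.U b * S.W * S.H a * S.U d

lemma H_mul_W (a : Kˣ) : S.H a * S.W = S.W * S.H a⁻¹ := by
  rw [S.W_mul_H, inv_inv]

lemma borel_mul_U (b : K) (a : Kˣ) (t : K) : S.borel b a * S.U t = S.borel (b + a ^ 2 * t) a := by
  rw [borel, borel, mul_assoc, S.H_mul_U, AddChar.map_add_eq_mul, mul_assoc]

lemma borel_mul_H (b : K) (a s : Kˣ) : S.borel b a * S.H s = S.borel b (a * s) := by
  rw [borel, borel, mul_assoc, map_mul]

lemma borel_mul_W (b : K) (a : Kˣ) : S.borel b a * S.W = S.cell b a⁻¹ 0 := by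
  rw [borel, cell, AddChar.map_zero_eq_one, mul_one, mul_assoc, mul_assoc, H_mul_W]

lemma cell_mul_U (b : K) (a : Kˣ) (d t : K) : S.cell b a d * S.U t = S.cell b a (d + t) := by
  rw [cell, cell, AddChar.map_add_eq_mul, mul_assoc _ _ (S.U t)]

lemma cell_mul_H (b : K) (a : Kˣ) (d : K) (s : Kˣ) :
    S.cell b a d * S.H s = S.cell b (a * s) ((s⁻¹ : Kˣ) ^ 2 * d) := by
  have commute : S.U d * S.H s = S.H s * S.U ((s⁻¹ : Kˣ) ^ 2 * d) := by
    rw [S.H_mul_U, ← mul_assoc, ← mul_pow, ← Units.val_mul, mul_inv_cancel, Units.val_one, one_pow,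
      one_mul]
  rw [cell, cell, mul_assoc, commute, S.H.map_mul]
  simp only [mul_assoc]

lemma cell_zero_mul_W (b : K) (a : Kˣ) : S.cell b a 0 * S.W = S.borel b (-a⁻¹) := by
  calc S.cell b a 0 * S.W = S.U b * (S.W * (S.H a * S.W)) := by
        simp only [cell, AddChar.map_zero_eq_one, mul_one, mul_assoc]
    _ = S.U b * (S.W * S.W * S.H a⁻¹) := by rw [H_mul_W, mul_assoc]
    _ = S.borel b (-a⁻¹) := by rw [S.W_mul_W, ← map_mul, neg_one_mul, borel]

lemma cell_mul_W (b : K) (a d : Kˣ) :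
    S.cell b a d * S.W = S.cell (b - ((a ^ 2 * d)⁻¹ : Kˣ)) (a * d) (-(d⁻¹ : Kˣ)) := by
  calc S.cell b a d * S.W
      = S.U b * S.W * (S.H a * S.U d) * S.W := by simp only [cell, mul_assoc]
    _ = S.U b * (S.W * S.U ((a ^ 2 * d : Kˣ) : K) * S.W) * S.H a⁻¹ := by
        rw [S.H_mul_U]
        simp only [mul_assoc, H_mul_W, Units.val_mul, Units.val_pow_eq_pow_val]
    _ = S.cell (b - ((a ^ 2 * d)⁻¹ : Kˣ)) (a ^ 2 * d) (-((a ^ 2 * d)⁻¹ : Kˣ)) * S.H a⁻¹ := by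
        rw [S.W_mul_U_mul_W, cell, sub_eq_add_neg, AddChar.map_add_eq_mul]
        simp only [mul_assoc]
    _ = S.cell (b - ((a ^ 2 * d)⁻¹ : Kˣ)) (a * d) (-(d⁻¹ : Kˣ)) := by
        rw [cell_mul_H, mul_right_comm, sq, mul_inv_cancel_right]
        congr 1
        push_cast
        field

end SteinbergTriple

section StandardTriple

variable {K : Type*} [Field K]

/-- The upper unipotent matrices of `SL(2, K)`. -/
def upperUnipotent : AddChar K SL(2, K) where
  toFun b := ⟨!![1, b; 0, 1], by simp⟩
  map_zero_eq_one' := Subtype.ext one_fin_two.symm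
  map_add_eq_mul' b c := Subtype.ext <| show _ = !![1, b; 0, 1] * !![1, c; 0, 1] by simp [add_comm]

lemma coe_upperUnipotent (b : K) :
    (upperUnipotent b : Matrix (Fin 2) (Fin 2) K) = !![1, b; 0, 1] := rfl

/-- The diagonal matrices of `SL(2, K)`. -/
def diagonalTorus : Kˣ →* SL(2, K) where
  toFun a := ⟨!![(a : K), 0; 0, (a⁻¹ : Kˣ)], by simp⟩
  map_one' := Subtype.ext (by simp [one_fin_two])
  map_mul' a b := Subtype.ext <|
    show _ = !![(a : K), 0; 0, (a⁻¹ : Kˣ)] * !![(b : K), 0; 0, (b⁻¹ : Kˣ)] by simp [mul_comm]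

lemma coe_diagonalTorus (a : Kˣ) :
    (diagonalTorus a : Matrix (Fin 2) (Fin 2) K) = !![(a : K), 0; 0, (a⁻¹ : Kˣ)] := rfl

variable (K) in
/-- The representative `!![0, -1; 1, 0]` of the nontrivial Weyl group element of `SL(2, K)`. -/
def weylElement : SL(2, K) := ⟨!![0, -1; 1, 0], by simp⟩

variable (K) in
lemma coe_weylElement : (weylElement K : Matrix (Fin 2) (Fin 2) K) = !![0, -1; 1, 0] := rfl

lemma apply_zero_zero_mul_apply_one_one {g : SL(2, K)} (hg : g 1 0 = 0) : g 0 0 * g 1 1 = 1 := by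
  have det := g.det_coe
  rwa [det_fin_two, hg, mul_zero, sub_zero] at det

lemma apply_zero_zero_ne_zero {g : SL(2, K)} (hg : g 1 0 = 0) : g 0 0 ≠ 0 :=
  left_ne_zero_of_mul_eq_one (apply_zero_zero_mul_apply_one_one hg)

variable (K) in
/-- The Steinberg triple formed by the standard generators of `SL(2, K)`. -/
def SteinbergTriple.standard : SteinbergTriple K SL(2, K) where
  U := upperUnipotent
  H := diagonalTorus
  W := weylElement K
  H_mul_U a b := SpecialLinearGroup.coeMonoidHom_injective <| by
    have scale : (a : K) * b = a ^ 2 * b * (a⁻¹ : Kˣ) := by push_cast; field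
    simpa [coe_upperUnipotent, coe_diagonalTorus] using scale
  W_mul_H a := SpecialLinearGroup.coeMonoidHom_injective <| by
    simp [coe_weylElement, coe_diagonalTorus]
  W_mul_W := SpecialLinearGroup.coeMonoidHom_injective <| by
    simp [coe_weylElement, coe_diagonalTorus]
  W_mul_U_mul_W t := SpecialLinearGroup.coeMonoidHom_injective <| by
    simp [coe_upperUnipotent, coe_weylElement, coe_diagonalTorus]

namespace SteinbergTriple

lemma coe_standard_borel (b : K) (a : Kˣ) :
    ((standard K).borel b a : Matrix (Fin 2) (Fin 2) K) =
      !![(a : K), b * (a⁻¹ : Kˣ); 0, (a⁻¹ : Kˣ)] := by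
  simp [borel, standard, coe_upperUnipotent, coe_diagonalTorus]

lemma coe_standard_cell (b : K) (a : Kˣ) (d : K) :
    ((standard K).cell b a d : Matrix (Fin 2) (Fin 2) K) =
      !![b * a, b * a * d - (a⁻¹ : Kˣ); (a : K), a * d] := by
  simp [cell, standard, coe_upperUnipotent, coe_diagonalTorus, coe_weylElement, sub_eq_add_neg]

lemma eq_borel {g : SL(2, K)} (hg : g 1 0 = 0) :
    g = (standard K).borel (g 0 1 * g 0 0) (.mk0 (g 0 0) (apply_zero_zero_ne_zero hg)) := by
  have corner := eq_inv_of_mul_eq_one_right (apply_zero_zero_mul_apply_one_one hg)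
  ext i j
  rw [coe_standard_borel]
  fin_cases i <;> fin_cases j <;> simp [hg, corner, apply_zero_zero_ne_zero hg]

lemma eq_cell {g : SL(2, K)} (hg : g 1 0 ≠ 0) :
    g = (standard K).cell (g 0 0 / g 1 0) (.mk0 _ hg) (g 1 1 / g 1 0) := by
  have det := g.det_coe
  rw [det_fin_two] at det
  ext i j
  rw [coe_standard_cell]
  fin_cases i <;> fin_cases j <;> simp [hg] <;> field_simp
  linear_combination -det

lemma eq_borel_or_eq_cell (g : SL(2, K)) :
    (∃ b a, g = (standard K).borel b a) ∨ ∃ b a d, g = (standard K).cell b a d :=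
  (em (g 1 0 = 0)).imp (fun hg => ⟨_, _, eq_borel hg⟩) fun hg => ⟨_, _, _, eq_cell hg⟩

variable {M : Type*} [Monoid M] (S : SteinbergTriple K M)

open scoped Classical in
/-- The map underlying `SteinbergTriple.lift`, read off the Bruhat normal form. -/
def liftFun (g : SL(2, K)) : M :=
  if hg : g 1 0 = 0 then S.borel (g 0 1 * g 0 0) (.mk0 (g 0 0) (apply_zero_zero_ne_zero hg))
  else S.cell (g 0 0 / g 1 0) (.mk0 _ hg) (g 1 1 / g 1 0)

lemma liftFun_borel (b : K) (a : Kˣ) : S.liftFun ((standard K).borel b a) = S.borel b a := by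
  simp [liftFun, coe_standard_borel]

lemma liftFun_cell (b : K) (a : Kˣ) (d : K) :
    S.liftFun ((standard K).cell b a d) = S.cell b a d := by
  simp [liftFun, coe_standard_cell]

lemma liftFun_mul_U (g : SL(2, K)) (t : K) :
    S.liftFun (g * (standard K).U t) = S.liftFun g * S.U t := by
  rcases eq_borel_or_eq_cell g with ⟨b, a, rfl⟩ | ⟨b, a, d, rfl⟩
  · simp only [borel_mul_U, liftFun_borel]
  · simp only [cell_mul_U, liftFun_cell]

lemma liftFun_mul_H (g : SL(2, K)) (s : Kˣ) :
    S.liftFun (g * (standard K).H s) = S.liftFun g * S.H s := by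
  rcases eq_borel_or_eq_cell g with ⟨b, a, rfl⟩ | ⟨b, a, d, rfl⟩
  · simp only [borel_mul_H, liftFun_borel]
  · simp only [cell_mul_H, liftFun_cell]

lemma liftFun_mul_W (g : SL(2, K)) :
    S.liftFun (g * (standard K).W) = S.liftFun g * S.W := by
  rcases eq_borel_or_eq_cell g with ⟨b, a, rfl⟩ | ⟨b, a, d, rfl⟩
  · simp only [borel_mul_W, liftFun_borel, liftFun_cell]
  · rcases eq_or_ne d 0 with rfl | hd
    · simp only [cell_zero_mul_W, liftFun_borel, liftFun_cell]
    · lift d to Kˣ using hd.isUnit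
      simp only [cell_mul_W, liftFun_cell]

/-- The homomorphism from `SL(2, K)` determined by a Steinberg triple. -/
def lift : SL(2, K) →* M where
  toFun := S.liftFun
  map_one' := by simp [liftFun, borel]
  map_mul' g g' := by
    rcases eq_borel_or_eq_cell g' with ⟨b, a, rfl⟩ | ⟨b, a, d, rfl⟩
    · rw [liftFun_borel, borel, borel, ← mul_assoc, liftFun_mul_H, liftFun_mul_U, mul_assoc]
    · rw [liftFun_cell, cell, cell]
      simp only [← mul_assoc, liftFun_mul_H, liftFun_mul_U, liftFun_mul_W]

lemma lift_borel (b : K) (a : Kˣ) : S.lift ((standard K).borel b a) = S.borel b a :=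
  S.liftFun_borel b a

lemma lift_cell (b : K) (a : Kˣ) (d : K) : S.lift ((standard K).cell b a d) = S.cell b a d :=
  S.liftFun_cell b a d

lemma lift_U (b : K) : S.lift (upperUnipotent b) = S.U b := by
  simpa [borel, standard] using S.lift_borel b 1

lemma lift_H (a : Kˣ) : S.lift (diagonalTorus a) = S.H a := by
  simpa [borel, standard] using S.lift_borel 0 a

lemma lift_W : S.lift (weylElement K) = S.W := by
  simpa [cell, standard] using S.lift_cell 0 1 0

lemma lift_mem (N : Submonoid M) (hU : ∀ b, S.U b ∈ N) (hH : ∀ a, S.H a ∈ N) (hW : S.W ∈ N)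
    (g : SL(2, K)) : S.lift g ∈ N := by
  rcases eq_borel_or_eq_cell g with ⟨b, a, rfl⟩ | ⟨b, a, d, rfl⟩
  · rw [lift_borel]
    exact N.mul_mem (hU b) (hH a)
  · rw [lift_cell]
    exact N.mul_mem (N.mul_mem (N.mul_mem (hU b) hW) (hH a)) (hU d)

lemma lift_injective (hborel : ∀ b a, S.borel b a = 1 → b = 0 ∧ a = 1)
    (hcell : ∀ b a d, S.cell b a d ≠ 1) : Function.Injective S.lift := by
  refine (injective_iff_map_eq_one _).mpr fun g hg => ?_
  rcases eq_borel_or_eq_cell g with ⟨b, a, rfl⟩ | ⟨b, a, d, rfl⟩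
  · obtain ⟨rfl, rfl⟩ := hborel b a (by rwa [lift_borel] at hg)
    rw [borel, AddChar.map_zero_eq_one, map_one, mul_one]
  · exact absurd (by rwa [lift_cell] at hg) (hcell b a d)

end SteinbergTriple

end StandardTriple

end Bruhat

section BinaryIcosahedralGroup

open scoped MatrixGroups

local instance : Fact (Nat.Prime 5) := ⟨by norm_num⟩

section KleinRepresentation

/-- The primitive fifth root of unity `exp (2πi/5)`. -/
def zeta : ℂ := ZMod.stdAddChar (1 : ZMod 5)

lemma stdAddChar_natCast (n : ℕ) : ZMod.stdAddChar (n : ZMod 5) = zeta ^ n := by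
  rw [zeta, ← AddChar.map_nsmul_eq_pow, nsmul_one]

lemma stdAddChar_pow_five (t : ZMod 5) : ZMod.stdAddChar t ^ 5 = 1 := by
  rw [← AddChar.map_nsmul_eq_pow, nsmul_eq_mul, ZMod.natCast_self, zero_mul,
    AddChar.map_zero_eq_one]

lemma isPrimitiveRoot_zeta : IsPrimitiveRoot zeta 5 := by
  have ne_one : zeta ≠ 1 := by
    rw [zeta, ← AddChar.map_zero_eq_one (ZMod.stdAddChar (N := 5)),
      ZMod.injective_stdAddChar.ne_iff]
    decide
  exact orderOf_eq_prime (stdAddChar_pow_five 1) ne_one ▸ IsPrimitiveRoot.orderOf zeta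

lemma sum_zeta_pow : 1 + zeta + zeta ^ 2 + zeta ^ 3 + zeta ^ 4 = 0 := by
  simpa [Finset.sum_range_succ] using isPrimitiveRoot_zeta.geom_sum_eq_zero (by norm_num)

/-- The quadratic Gauss sum modulo `5`, which is a square root of `5`. -/
def gaussSum5 : ℂ := zeta - zeta ^ 2 - zeta ^ 3 + zeta ^ 4

lemma gaussSum5_sq : gaussSum5 ^ 2 = 5 := by
  have := sum_zeta_pow
  unfold gaussSum5
  grind

/-- The diagonal entry of `kleinW`, namely `(ζ - ζ⁴) / √5`. -/
def kleinA : ℂ := gaussSum5 / 5 * (zeta - zeta ^ 4)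

/-- The off-diagonal entry of `kleinW`, namely `(ζ³ - ζ²) / √5`. -/
def kleinB : ℂ := gaussSum5 / 5 * (zeta ^ 3 - zeta ^ 2)

lemma kleinA_sq_add_kleinB_sq : kleinA ^ 2 + kleinB ^ 2 = -1 := by
  have := sum_zeta_pow
  unfold kleinA kleinB gaussSum5
  grind

lemma kleinA_mul_kleinB : kleinA * kleinB = gaussSum5 / 5 := by
  have := sum_zeta_pow
  unfold kleinA kleinB gaussSum5
  grind

lemma kleinB_sq_sub_kleinA_sq : kleinB ^ 2 - kleinA ^ 2 = kleinA * kleinB := by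
  have := sum_zeta_pow
  unfold kleinA kleinB gaussSum5
  grind

/-- The diagonal matrices `diag(ζ^(3t), ζ^(2t))`. -/
def kleinU : AddChar (ZMod 5) SL(2, ℂ) where
  toFun t := ⟨!![ZMod.stdAddChar (3 * t), 0; 0, ZMod.stdAddChar (2 * t)], by
    rw [det_fin_two_of, mul_zero, sub_zero, ← AddChar.map_add_eq_mul, ← add_mul,
      show (3 + 2 : ZMod 5) = 0 by decide, zero_mul, AddChar.map_zero_eq_one]⟩
  map_zero_eq_one' := Subtype.ext (by simp [one_fin_two])
  map_add_eq_mul' s t := Subtype.ext <|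
    show _ = !![ZMod.stdAddChar (3 * s), 0; 0, ZMod.stdAddChar (2 * s)] *
      !![ZMod.stdAddChar (3 * t), 0; 0, ZMod.stdAddChar (2 * t)] by
    simp [mul_add, AddChar.map_add_eq_mul]

lemma coe_kleinU (t : ZMod 5) : (kleinU t : Matrix (Fin 2) (Fin 2) ℂ) =
    !![ZMod.stdAddChar (3 * t), 0; 0, ZMod.stdAddChar (2 * t)] := rfl

/-- The element of order four of the binary icosahedral group that exchanges the coordinates up to
sign. -/
def quarterTurn : SL(2, ℂ) := ⟨!![0, 1; -1, 0], by simp⟩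

lemma coe_quarterTurn : (quarterTurn : Matrix (Fin 2) (Fin 2) ℂ) = !![0, 1; -1, 0] := rfl

lemma quarterTurn_sq : quarterTurn ^ 2 = -1 := by
  rw [sq]
  exact SpecialLinearGroup.coeMonoidHom_injective (by simp [coe_quarterTurn, one_fin_two])

lemma orderOf_quarterTurn : orderOf quarterTurn = 2 ^ 2 := by
  refine orderOf_eq_prime_pow ?_ ?_
  · rw [pow_one, quarterTurn_sq]
    exact fun h => by
      simpa [neg_eq_iff_add_eq_zero] using
        congr_fun₂ (congr_arg SpecialLinearGroup.coeMonoidHom h) 0 0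
  · rw [pow_succ, pow_one, pow_mul, quarterTurn_sq, neg_one_sq]

/-- The generator `2` of the multiplicative group modulo `5`. -/
def unitTwo : (ZMod 5)ˣ := .mkOfMulEqOne 2 3 (by decide)

lemma unitTwo_sq : unitTwo ^ 2 = -1 := by decide

lemma orderOf_unitTwo : orderOf unitTwo = 2 ^ 2 :=
  orderOf_eq_prime_pow (by decide) (by decide)

lemma exists_eq_unitTwo_pow (a : (ZMod 5)ˣ) : ∃ n : Fin 4, a = unitTwo ^ (n : ℕ) := by
  revert a; decide

/-- The homomorphism that maps `2` to `quarterTurn`. -/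
def kleinH : (ZMod 5)ˣ →* SL(2, ℂ) :=
  monoidHomOfForallMemZpowers (g := unitTwo) (g' := quarterTurn)
    (fun a => (exists_eq_unitTwo_pow a).imp' _ fun _ h => (zpow_natCast _ _).trans h.symm) <| by
      rw [orderOf_unitTwo, ← orderOf_quarterTurn]

lemma kleinH_unitTwo : kleinH unitTwo = quarterTurn :=
  monoidHomOfForallMemZpowers_apply_gen _ _

/-- Klein's generator of the binary icosahedral group that is not monomial. -/
def kleinW : SL(2, ℂ) := ⟨!![kleinA, kleinB; kleinB, -kleinA], by
  rw [det_fin_two_of]; linear_combination -kleinA_sq_add_kleinB_sq⟩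

lemma coe_kleinW : (kleinW : Matrix (Fin 2) (Fin 2) ℂ) = !![kleinA, kleinB; kleinB, -kleinA] := rfl

lemma kleinW_mul_quarterTurn : kleinW * quarterTurn = quarterTurn⁻¹ * kleinW :=
  SpecialLinearGroup.coeMonoidHom_injective <| by
    simp [coe_kleinW, coe_quarterTurn, adjugate_fin_two_of]

lemma kleinW_sq : kleinW * kleinW = -1 :=
  SpecialLinearGroup.coeMonoidHom_injective <| by
    have diagonal : kleinA * kleinA + kleinB * kleinB = -1 := by
      simpa only [sq] using kleinA_sq_add_kleinB_sq
    simp [coe_kleinW, one_fin_two, diagonal, add_comm (kleinB * kleinB), mul_comm kleinB kleinA]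

lemma quarterTurn_mul_kleinU (b : ZMod 5) :
    quarterTurn * kleinU b = kleinU ((unitTwo : ZMod 5) ^ 2 * b) * quarterTurn := by
  have swap_three : (3 : ZMod 5) * ((unitTwo : ZMod 5) ^ 2 * b) = 2 * b := by revert b; decide
  have swap_two : (2 : ZMod 5) * ((unitTwo : ZMod 5) ^ 2 * b) = 3 * b := by revert b; decide
  exact SpecialLinearGroup.coeMonoidHom_injective <| by
    simp [coe_kleinU, coe_quarterTurn, swap_three, swap_two]

lemma kleinH_mul_kleinU (a : (ZMod 5)ˣ) (b : ZMod 5) :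
    kleinH a * kleinU b = kleinU ((a : ZMod 5) ^ 2 * b) * kleinH a := by
  obtain ⟨n, rfl⟩ := exists_eq_unitTwo_pow a
  induction (n : ℕ) with
  | zero => simp
  | succ k ih =>
    rw [pow_succ', map_mul, mul_assoc, ih, ← mul_assoc, kleinH_unitTwo, quarterTurn_mul_kleinU,
      mul_assoc, Units.val_mul, mul_pow, mul_assoc]

lemma kleinW_mul_kleinH (a : (ZMod 5)ˣ) : kleinW * kleinH a = kleinH a⁻¹ * kleinW := by
  obtain ⟨n, rfl⟩ := exists_eq_unitTwo_pow a
  have semiconj : SemiconjBy kleinW quarterTurn quarterTurn⁻¹ := kleinW_mul_quarterTurn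
  rw [map_inv, map_pow, kleinH_unitTwo, ← inv_pow]
  exact semiconj.pow_right n

lemma coe_kleinU_of_eq {t : ZMod 5} {m n : ℕ} (hm : 3 * t = m) (hn : 2 * t = n) :
    (kleinU t : Matrix (Fin 2) (Fin 2) ℂ) = !![zeta ^ m, 0; 0, zeta ^ n] := by
  rw [coe_kleinU, hm, hn, stdAddChar_natCast, stdAddChar_natCast]

lemma kleinW_mul_kleinU_one_mul_kleinW :
    kleinW * kleinU 1 * kleinW = kleinU (-1) * kleinW * kleinU (-1) := by
  have U_one := coe_kleinU_of_eq (t := 1) (m := 3) (n := 2) rfl rfl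
  have U_neg_one := coe_kleinU_of_eq (t := -1) (m := 2) (n := 3) rfl rfl
  refine SpecialLinearGroup.coeMonoidHom_injective ?_
  have := sum_zeta_pow
  simp only [map_mul, SpecialLinearGroup.coeMonoidHom_apply, U_one, U_neg_one, coe_kleinW, kleinA,
    kleinB, gaussSum5]
  ext i j
  fin_cases i <;> fin_cases j <;> simp <;> grind

lemma kleinW_mul_kleinU_two_mul_kleinW :
    kleinW * kleinU 2 * kleinW = kleinU 2 * kleinW * quarterTurn * kleinU 2 := by
  have U_two := coe_kleinU_of_eq (t := 2) (m := 1) (n := 4) rfl rfl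
  refine SpecialLinearGroup.coeMonoidHom_injective ?_
  have := sum_zeta_pow
  simp only [map_mul, SpecialLinearGroup.coeMonoidHom_apply, U_two, coe_quarterTurn, coe_kleinW,
    kleinA, kleinB, gaussSum5]
  ext i j
  fin_cases i <;> fin_cases j <;> simp <;> grind

lemma kleinW_mul_kleinU_mul_kleinW (t : (ZMod 5)ˣ) :
    kleinW * kleinU t * kleinW = kleinU (-(t⁻¹ : (ZMod 5)ˣ)) * kleinW * kleinH t *
      kleinU (-(t⁻¹ : (ZMod 5)ˣ)) := by
  obtain ⟨a, rfl | rfl⟩ : ∃ a, t = a ^ 2 * 1 ∨ t = a ^ 2 * unitTwo := by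
    revert t; decide
  · refine W_mul_U_mul_W_of_sq_mul kleinH_mul_kleinU kleinW_mul_kleinH ?_ a
    simpa using kleinW_mul_kleinU_one_mul_kleinW
  · refine W_mul_U_mul_W_of_sq_mul kleinH_mul_kleinU kleinW_mul_kleinH ?_ a
    rw [kleinH_unitTwo]
    exact kleinW_mul_kleinU_two_mul_kleinW

/-- Klein's generators of the binary icosahedral group, as images of the standard generators of
`SL(2, 5)`. -/
def kleinTriple : SteinbergTriple (ZMod 5) SL(2, ℂ) where
  U := kleinU
  H := kleinH
  W := kleinW
  H_mul_U := kleinH_mul_kleinU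
  W_mul_H := kleinW_mul_kleinH
  W_mul_W := by rw [← unitTwo_sq, map_pow, kleinH_unitTwo, quarterTurn_sq, kleinW_sq]
  W_mul_U_mul_W := kleinW_mul_kleinU_mul_kleinW

/-- Klein's faithful representation of `SL(2, 5)` on `ℂ²`; its image is the binary icosahedral
group. -/
def kleinRep : SL(2, ZMod 5) →* SL(2, ℂ) := kleinTriple.lift

lemma kleinA_mul_kleinB_ne_zero : kleinA * kleinB ≠ 0 := by
  have gaussSum5_ne_zero : gaussSum5 ≠ 0 := fun h => by simpa [h] using gaussSum5_sq
  rw [kleinA_mul_kleinB]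
  exact div_ne_zero gaussSum5_ne_zero (by norm_num)

lemma kleinU_injective : Function.Injective kleinU := fun s t h => by
  have corner : ZMod.stdAddChar (2 * s) = ZMod.stdAddChar (2 * t) := by
    simpa [coe_kleinU] using congr_fun₂ (congr_arg SpecialLinearGroup.coeMonoidHom h) 1 1
  exact mul_left_cancel₀ (by decide) (ZMod.injective_stdAddChar corner)

lemma kleinH_injective : Function.Injective kleinH := by
  refine (injective_iff_map_eq_one _).mpr fun a ha => ?_
  obtain ⟨n, rfl⟩ := exists_eq_unitTwo_pow a
  rw [map_pow, kleinH_unitTwo] at ha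
  exact orderOf_dvd_iff_pow_eq_one.mp
    (orderOf_unitTwo.trans orderOf_quarterTurn.symm ▸ orderOf_dvd_of_pow_eq_one ha)

lemma kleinH_apply_zero_zero_mul_apply_zero_one (a : (ZMod 5)ˣ) :
    kleinH a 0 0 * kleinH a 0 1 = 0 := by
  obtain ⟨n, rfl⟩ := exists_eq_unitTwo_pow a
  rw [map_pow, kleinH_unitTwo]
  fin_cases n <;> simp [pow_succ, coe_quarterTurn]

lemma kleinW_ne_kleinU_mul_kleinH (b : ZMod 5) (a : (ZMod 5)ˣ) :
    kleinW ≠ kleinU b * kleinH a := fun h => by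
  have entry (j : Fin 2) : kleinW 0 j = ZMod.stdAddChar (3 * b) * kleinH a 0 j := by
    simp [h, coe_kleinU, Matrix.mul_apply]
  refine kleinA_mul_kleinB_ne_zero ?_
  calc kleinA * kleinB = kleinW 0 0 * kleinW 0 1 := rfl
    _ = ZMod.stdAddChar (3 * b) ^ 2 * (kleinH a 0 0 * kleinH a 0 1) := by
        rw [entry, entry]; ring
    _ = 0 := by rw [kleinH_apply_zero_zero_mul_apply_zero_one, mul_zero]

lemma eq_zero_and_eq_one_of_kleinU_mul_kleinH_eq_one {b : ZMod 5} {a : (ZMod 5)ˣ}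
    (h : kleinU b * kleinH a = 1) : b = 0 ∧ a = 1 := by
  have H_eq : kleinH a = kleinU (-b) := by
    rw [AddChar.map_neg_eq_inv]
    exact eq_inv_of_mul_eq_one_right h
  have ha : a = 1 := by
    have pow_five : ∀ a : (ZMod 5)ˣ, a ^ 5 = a := by decide
    refine kleinH_injective ?_
    rw [← pow_five a, map_pow, H_eq, ← AddChar.map_nsmul_eq_pow, nsmul_eq_mul, ZMod.natCast_self,
      zero_mul, map_one, AddChar.map_zero_eq_one]
  rw [ha, map_one, ← AddChar.map_zero_eq_one kleinU] at H_eq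
  exact ⟨neg_eq_zero.mp (kleinU_injective H_eq.symm), ha⟩

lemma kleinRep_injective : Function.Injective kleinRep := by
  refine kleinTriple.lift_injective (fun _ _ => eq_zero_and_eq_one_of_kleinU_mul_kleinH_eq_one)
    (fun b a d h => kleinW_ne_kleinU_mul_kleinH (-b + -d) a⁻¹ ?_)
  have cell_eq_one : kleinU b * kleinW * kleinH a * kleinU d = 1 := h
  calc kleinW = (kleinU b)⁻¹ * (kleinU b * kleinW * kleinH a * kleinU d) * (kleinU d)⁻¹ *
        (kleinH a)⁻¹ := by group
    _ = kleinU (-b + -d) * kleinH a⁻¹ := by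
        rw [cell_eq_one, mul_one, AddChar.map_add_eq_mul, AddChar.map_neg_eq_inv,
          AddChar.map_neg_eq_inv, map_inv]

end KleinRepresentation

section BinaryFormInvariance

lemma faceForm_eq_of_pow_five_eq {R : Type*} [CommRing R] {x x' y y' : R} (hx : x' ^ 5 = x ^ 5)
    (hy : y' ^ 5 = y ^ 5) : faceForm x' y' = faceForm x y := by
  have in_fifth_powers (x y : R) : faceForm x y = (x ^ 5) ^ 4 -
      228 * ((x ^ 5) ^ 3 * y ^ 5 - x ^ 5 * (y ^ 5) ^ 3) + 494 * (x ^ 5) ^ 2 * (y ^ 5) ^ 2 +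
      (y ^ 5) ^ 4 := by
    rw [faceForm]; ring
  rw [in_fifth_powers, hx, hy, ← in_fifth_powers]

lemma faceForm_reflection {K : Type*} [Field K] [CharZero K] {a b : K}
    (sq_add : a ^ 2 + b ^ 2 = -1) (sq_sub : b ^ 2 - a ^ 2 = a * b) (x y : K) :
    faceForm (a * x + b * y) (b * x + -a * y) = faceForm x y := by
  have in_squares (x y : K) : faceForm x y = ((x ^ 2) ^ 5 - (y ^ 2) ^ 5) ^ 2 -
      228 * (x * y) ^ 5 * ((x ^ 2) ^ 5 - (y ^ 2) ^ 5) + 496 * (x * y) ^ 10 := by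
    rw [faceForm]; ring
  -- The new values of `x ^ 2`, `y ^ 2` and `x * y` are linear in the old ones over `ℚ(r)`.
  obtain ⟨r, hr⟩ : ∃ r, a * b = r := ⟨_, rfl⟩
  have r_sq : r ^ 2 = 1 / 5 := by grind
  obtain ⟨A, hA⟩ : ∃ A, A = -(x ^ 2 + y ^ 2) := ⟨_, rfl⟩
  obtain ⟨B, hB⟩ : ∃ B, B = -x ^ 2 + 4 * x * y + y ^ 2 := ⟨_, rfl⟩
  obtain ⟨P, hP⟩ : ∃ P, P = x ^ 2 + x * y - y ^ 2 := ⟨_, rfl⟩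
  have left_sq : (a * x + b * y) ^ 2 = (A + r * B) / 2 := by
    rw [hA, hB]
    linear_combination (x ^ 2 + y ^ 2) / 2 * sq_add - (x ^ 2 - y ^ 2) / 2 * sq_sub +
      (2 * x * y - (x ^ 2 - y ^ 2) / 2) * hr
  have right_sq : (b * x + -a * y) ^ 2 = (A - r * B) / 2 := by
    rw [hA, hB]
    linear_combination (x ^ 2 + y ^ 2) / 2 * sq_add + (x ^ 2 - y ^ 2) / 2 * sq_sub -
      (2 * x * y - (x ^ 2 - y ^ 2) / 2) * hr
  have product : (a * x + b * y) * (b * x + -a * y) = r * P := by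
    rw [hP]
    linear_combination x * y * sq_sub + (x ^ 2 + x * y - y ^ 2) * hr
  have pow_five_sub : ((A + r * B) / 2) ^ 5 - ((A - r * B) / 2) ^ 5 =
      r * ((5 * A ^ 4 * B + 10 * r ^ 2 * A ^ 2 * B ^ 3 + (r ^ 2) ^ 2 * B ^ 5) / 16) := by ring
  calc faceForm (a * x + b * y) (b * x + -a * y)
      = r ^ 2 * ((5 * A ^ 4 * B + 10 * r ^ 2 * A ^ 2 * B ^ 3 + (r ^ 2) ^ 2 * B ^ 5) / 16) ^ 2 -
        228 * ((r ^ 2) ^ 3 * P ^ 5) *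
          ((5 * A ^ 4 * B + 10 * r ^ 2 * A ^ 2 * B ^ 3 + (r ^ 2) ^ 2 * B ^ 5) / 16) +
        496 * ((r ^ 2) ^ 5 * P ^ 10) := by
        rw [in_squares, left_sq, right_sq, product, pow_five_sub]; ring
    _ = faceForm x y := by rw [r_sq, hA, hB, hP, faceForm]; ring

/-- The matrices leaving `faceForm` invariant under linear substitution. -/
def faceFormStabilizer : Submonoid (Matrix (Fin 2) (Fin 2) ℂ) where
  carrier := {B | ∀ v, faceForm ((B *ᵥ v) 0) ((B *ᵥ v) 1) = faceForm (v 0) (v 1)}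
  one_mem' v := by rw [one_mulVec]
  mul_mem' {B B'} hB hB' v := by rw [← mulVec_mulVec, hB, hB']

lemma mem_faceFormStabilizer {B : Matrix (Fin 2) (Fin 2) ℂ} : B ∈ faceFormStabilizer ↔
    ∀ x y, faceForm (B 0 0 * x + B 0 1 * y) (B 1 0 * x + B 1 1 * y) = faceForm x y := by
  refine ⟨fun hB x y => by simpa [mulVec, dotProduct] using hB ![x, y], fun hB v => ?_⟩
  simpa [mulVec, dotProduct] using hB (v 0) (v 1)

lemma smul_mem_faceFormStabilizer {B : Matrix (Fin 2) (Fin 2) ℂ} {z : ℂ}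
    (hB : B ∈ faceFormStabilizer) (hz : z ^ 20 = 1) : z • B ∈ faceFormStabilizer := fun v => by
  rw [smul_mulVec, Pi.smul_apply, Pi.smul_apply, smul_eq_mul, smul_eq_mul, faceForm_smul, hz,
    one_mul, hB v]

lemma kleinU_mem_faceFormStabilizer (t : ZMod 5) : (kleinU t).1 ∈ faceFormStabilizer := by
  refine mem_faceFormStabilizer.mpr fun x y => faceForm_eq_of_pow_five_eq ?_ ?_ <;>
  simp [coe_kleinU, mul_pow, stdAddChar_pow_five]

lemma quarterTurn_mem_faceFormStabilizer : quarterTurn.1 ∈ faceFormStabilizer := by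
  refine mem_faceFormStabilizer.mpr fun x y => ?_
  simp only [coe_quarterTurn, of_apply, cons_val', cons_val_zero, cons_val_one, faceForm]
  ring

lemma kleinW_mem_faceFormStabilizer : kleinW.1 ∈ faceFormStabilizer :=
  mem_faceFormStabilizer.mpr <|
    faceForm_reflection kleinA_sq_add_kleinB_sq kleinB_sq_sub_kleinA_sq

lemma kleinRep_mem_faceFormStabilizer (g : SL(2, ZMod 5)) :
    (kleinRep g : Matrix (Fin 2) (Fin 2) ℂ) ∈ faceFormStabilizer := by
  let N : Submonoid SL(2, ℂ) := faceFormStabilizer.comap SpecialLinearGroup.coeMonoidHom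
  have quarterTurn_mem : quarterTurn ∈ N := quarterTurn_mem_faceFormStabilizer
  have kleinH_mem (a : (ZMod 5)ˣ) : kleinH a ∈ N := by
    obtain ⟨n, rfl⟩ := exists_eq_unitTwo_pow a
    rw [map_pow, kleinH_unitTwo]
    exact N.pow_mem quarterTurn_mem n
  exact kleinTriple.lift_mem N kleinU_mem_faceFormStabilizer kleinH_mem
    kleinW_mem_faceFormStabilizer g

end BinaryFormInvariance

section VertexOrbit

lemma mul_pow_five_mul_vertexForm {R : Type*} [CommRing R] {a b : R}
    (sq_sub : b ^ 2 - a ^ 2 = a * b) (x y : R) :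
    (a * b) ^ 5 * vertexForm x y =
      x * y * (((b * x) ^ 5 - (a * y) ^ 5) * ((a * x) ^ 5 - (-(b * y)) ^ 5)) := by
  have pow_ten_sub : b ^ 10 - a ^ 10 = 11 * (a * b) ^ 5 :=
    calc b ^ 10 - a ^ 10 = (b ^ 2 - a ^ 2) ^ 5 + 5 * (a * b) ^ 2 * (b ^ 2 - a ^ 2) ^ 3 +
          5 * (a * b) ^ 4 * (b ^ 2 - a ^ 2) := by ring
      _ = 11 * (a * b) ^ 5 := by rw [sq_sub]; ring
  rw [vertexForm]
  linear_combination -(x * y) ^ 6 * pow_ten_sub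

lemma exists_eq_stdAddChar_mul {x y : ℂ} (h : x ^ 5 = y ^ 5) :
    ∃ t : ZMod 5, x = ZMod.stdAddChar t * y := by
  rcases eq_or_ne y 0 with rfl | hy
  · exact ⟨0, by simpa using h⟩
  obtain ⟨n, -, hn⟩ := isPrimitiveRoot_zeta.eq_pow_of_pow_eq_one (ξ := x / y)
    (by rw [div_pow, h, div_self (pow_ne_zero _ hy)])
  exact ⟨n, by rw [stdAddChar_natCast, hn, div_mul_cancel₀ _ hy]⟩

lemma kleinRep_upperUnipotent (t : ZMod 5) : kleinRep (upperUnipotent t) = kleinU t :=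
  kleinTriple.lift_U t

lemma kleinRep_weylElement : kleinRep (weylElement (ZMod 5)) = kleinW :=
  kleinTriple.lift_W

lemma kleinRep_diagonalTorus_unitTwo : kleinRep (diagonalTorus unitTwo) = quarterTurn :=
  (kleinTriple.lift_H unitTwo).trans kleinH_unitTwo

lemma exists_eq_mul_col_zero {R : Type*} [CommRing R] {g : SL(2, R)} {p q : R}
    (h : p * g 1 0 = q * g 0 0) : ∃ l, p = l * g 0 0 ∧ q = l * g 1 0 := by
  have det := g.det_coe
  rw [det_fin_two] at det
  refine ⟨p * g 1 1 - q * g 0 1, ?_, ?_⟩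
  · linear_combination -p * det - g 0 1 * h
  · linear_combination -q * det - g 1 1 * h

/-- The vertices of the icosahedron form a single orbit. -/
lemma exists_eq_mul_kleinRep_col_zero {p q : ℂ} (h : vertexForm p q = 0) :
    ∃ (g : SL(2, ZMod 5)) (l : ℂ), p = l * kleinRep g 0 0 ∧ q = l * kleinRep g 1 0 := by
  suffices ∃ g, p * kleinRep g 1 0 = q * kleinRep g 0 0 from
    this.imp fun _ => exists_eq_mul_col_zero
  have char_three (t : ZMod 5) : ZMod.stdAddChar (3 * t) =
      ZMod.stdAddChar t * ZMod.stdAddChar (2 * t) := by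
    rw [← AddChar.map_add_eq_mul]; congr 1; ring
  have factored := mul_pow_five_mul_vertexForm kleinB_sq_sub_kleinA_sq p q
  rw [h, mul_zero, eq_comm, mul_eq_zero, mul_eq_zero, mul_eq_zero, sub_eq_zero, sub_eq_zero,
    or_assoc] at factored
  rcases factored with rfl | rfl | hpq | hpq
  · exact ⟨diagonalTorus unitTwo, by simp [kleinRep_diagonalTorus_unitTwo, coe_quarterTurn]⟩
  · exact ⟨1, by simp⟩
  · obtain ⟨t, ht⟩ := exists_eq_stdAddChar_mul hpq
    refine ⟨upperUnipotent t * weylElement _, ?_⟩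
    simp only [map_mul, kleinRep_upperUnipotent, kleinRep_weylElement,
      Matrix.SpecialLinearGroup.coe_mul, coe_kleinU, coe_kleinW, char_three, mul_fin_two, of_apply,
      cons_val', cons_val_zero, cons_val_one, cons_val_fin_one]
    linear_combination ZMod.stdAddChar (2 * t) * ht
  · obtain ⟨t, ht⟩ := exists_eq_stdAddChar_mul hpq
    refine ⟨upperUnipotent t * weylElement _ * diagonalTorus unitTwo, ?_⟩
    simp only [map_mul, kleinRep_upperUnipotent, kleinRep_weylElement,
      kleinRep_diagonalTorus_unitTwo, Matrix.SpecialLinearGroup.coe_mul, coe_kleinU, coe_kleinW,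
      coe_quarterTurn, char_three, mul_fin_two, of_apply, cons_val', cons_val_zero, cons_val_one,
      cons_val_fin_one]
    linear_combination ZMod.stdAddChar (2 * t) * ht

end VertexOrbit

section StabilizerClassification

lemma pow_eq_one_and_eq_zero_of_upper_mem_faceFormStabilizer {α β δ : ℂ}
    (h : !![α, β; 0, δ] ∈ faceFormStabilizer) : α ^ 20 = 1 ∧ β = 0 := by
  have invariance (x y : ℂ) : faceForm (α * x + β * y) (δ * y) = faceForm x y := by
    simpa using mem_faceFormStabilizer.mp h x y
  have alpha_pow : α ^ 20 = 1 := by simpa [faceForm] using invariance 1 0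
  have identity : faceForm (.C α + .C β * .X) (.C δ * .X) = faceForm 1 (.X : Polynomial ℂ) :=
    Polynomial.funext fun y => by simpa [faceForm] using invariance 1 y
  have linear_term : α = 0 ∨ β = 0 := by
    simpa [faceForm, Polynomial.derivative_pow] using
      congr_arg (fun p => p.derivative.eval 0) identity
  refine ⟨alpha_pow, linear_term.resolve_left ?_⟩
  rintro rfl
  simp at alpha_pow

lemma pow_five_eq_of_diagonal_mem_faceFormStabilizer {α δ : ℂ}
    (h : !![α, 0; 0, δ] ∈ faceFormStabilizer) : α ^ 5 = δ ^ 5 := by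
  have invariance (x y : ℂ) : faceForm (α * x) (δ * y) = faceForm x y := by
    simpa using mem_faceFormStabilizer.mp h x y
  -- Comparing `s` with `-s` isolates the monomials in which the exponents are odd.
  have odd_part (s : ℂ) (hs : s ^ 5 = s) :
      α ^ 15 * δ ^ 5 * s - α ^ 5 * δ ^ 15 * s ^ 3 = s - s ^ 3 := by
    have expand (x y : ℂ) : faceForm x (y * s) - faceForm x (y * -s) =
        -456 * (x ^ 15 * y ^ 5 * s - x ^ 5 * y ^ 15 * s ^ 3) := by
      simp only [faceForm]
      linear_combination -456 * (x ^ 15 * y ^ 5 - x ^ 5 * y ^ 15 * (s ^ 10 + s ^ 6 + s ^ 2)) * hs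
    have scaled := expand (α * 1) δ
    have standard := expand 1 1
    rw [invariance, invariance] at scaled
    simp only [one_mul, mul_one] at scaled standard
    linear_combination (scaled - standard) / 456
  have alpha_pow : α ^ 20 = 1 := (pow_eq_one_and_eq_zero_of_upper_mem_faceFormStabilizer h).1
  have at_one := odd_part 1 (by norm_num)
  have at_I := odd_part Complex.I (by rw [Complex.I_pow_eq_pow_mod, pow_one])
  rw [Complex.I_pow_three, sub_neg_eq_add, mul_neg, sub_neg_eq_add, ← add_mul, ← two_mul] at at_I
  have product : α ^ 15 * δ ^ 5 = 1 := by
    linear_combination at_one / 2 + mul_right_cancel₀ Complex.I_ne_zero at_I / 2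
  linear_combination δ ^ 5 * alpha_pow - α ^ 5 * product

lemma exists_eq_smul_kleinU {B : Matrix (Fin 2) (Fin 2) ℂ} (hB : B ∈ faceFormStabilizer)
    (corner : B 1 0 = 0) :
    ∃ (z : ℂ) (t : ZMod 5), z ^ 20 = 1 ∧ B = z • (kleinU t : Matrix (Fin 2) (Fin 2) ℂ) := by
  obtain ⟨α, β, γ, δ, rfl⟩ : ∃ α β γ δ, B = !![α, β; γ, δ] := ⟨_, _, _, _, eta_fin_two B⟩
  obtain rfl : γ = 0 := corner
  obtain ⟨pow_twenty, rfl⟩ := pow_eq_one_and_eq_zero_of_upper_mem_faceFormStabilizer hB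
  have pow_five := pow_five_eq_of_diagonal_mem_faceFormStabilizer hB
  obtain ⟨t, rfl⟩ := exists_eq_stdAddChar_mul pow_five
  refine ⟨ZMod.stdAddChar (3 * t) * δ, t, ?_, ?_⟩
  · calc (ZMod.stdAddChar (3 * t) * δ) ^ 20
        = (ZMod.stdAddChar (3 * t) ^ 5) ^ 4 * (δ ^ 5) ^ 4 := by ring
      _ = 1 := by rw [stdAddChar_pow_five, ← pow_five, one_pow, one_mul, ← pow_mul, pow_twenty]
  · have upper_char : ZMod.stdAddChar (3 * t) * ZMod.stdAddChar (3 * t) = ZMod.stdAddChar t := by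
      rw [← AddChar.map_add_eq_mul, ← add_mul, show (3 + 3 : ZMod 5) = 1 by decide, one_mul]
    have lower_char : ZMod.stdAddChar (3 * t) * ZMod.stdAddChar (2 * t) = 1 := by
      rw [← AddChar.map_add_eq_mul, ← add_mul, show (3 + 2 : ZMod 5) = 0 by decide, zero_mul,
        AddChar.map_zero_eq_one]
    simp [coe_kleinU, mul_right_comm _ δ, upper_char, lower_char]

lemma exists_eq_smul_kleinRep {B : Matrix (Fin 2) (Fin 2) ℂ} (hB : B ∈ faceFormStabilizer)
    (vertex : vertexForm (B 0 0) (B 1 0) = 0) :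
    ∃ (z : ℂ) (g : SL(2, ZMod 5)), z ^ 20 = 1 ∧
      B = z • (kleinRep g : Matrix (Fin 2) (Fin 2) ℂ) := by
  obtain ⟨g, l, col_zero, col_one⟩ := exists_eq_mul_kleinRep_col_zero vertex
  set M := (kleinRep g : Matrix (Fin 2) (Fin 2) ℂ)
  set M' := (kleinRep g⁻¹ : Matrix (Fin 2) (Fin 2) ℂ) 
  have inv_mul : M' * M = 1 := by
    rw [← Matrix.SpecialLinearGroup.coe_mul, ← map_mul, inv_mul_cancel, map_one,
      Matrix.SpecialLinearGroup.coe_one]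
  have corner : (M' * B) 1 0 = 0 := by
    calc (M' * B) 1 0 = l * (M' * M) 1 0 := by
          rw [Matrix.mul_apply, Matrix.mul_apply, Fin.sum_univ_two, Fin.sum_univ_two, col_zero,
            col_one]
          ring
      _ = 0 := by rw [inv_mul, one_apply_ne (by decide), mul_zero]
  obtain ⟨z, t, hz, eq⟩ :=
    exists_eq_smul_kleinU (mul_mem (kleinRep_mem_faceFormStabilizer g⁻¹) hB) corner
  refine ⟨z, g * upperUnipotent t, hz, ?_⟩
  rw [map_mul, Matrix.SpecialLinearGroup.coe_mul, kleinRep_upperUnipotent, ← mul_smul_comm, ← eq,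
    ← mul_assoc, mul_eq_one_comm.mp inv_mul, one_mul]

end StabilizerClassification

section BlockForm

lemma dvd_pderiv_of_mul_self_dvd {σ R : Type*} [CommSemiring R] {p F : MvPolynomial σ R}
    (h : p * p ∣ F) (i : σ) : p ∣ pderiv i F := by
  obtain ⟨q, rfl⟩ := h
  exact ⟨pderiv i (p * q) + pderiv i p * q, by rw [mul_assoc, pderiv_mul]; ring⟩

lemma squarefree_G20 : Squarefree G20 := by
  have ne_zero_at : eval ![1, 0, 0] G20 ≠ 0 := by simp [eval_G20, faceForm]
  refine (squarefree_iff_no_irreducibles fun h => ne_zero_at (by rw [h, map_zero])).mpr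
    fun p hp sq_dvd => ?_
  have pderiv_two : pderiv 2 G20 = C 20 * X 2 ^ 19 := by
    simp [G20, pderiv_X, pderiv_ofNat (R := ℂ), map_ofNat C]
  have dvd_X : p ∣ X 2 := by
    have dvd := pderiv_two ▸ dvd_pderiv_of_mul_self_dvd sq_dvd 2
    refine hp.prime.dvd_of_dvd_pow ((hp.prime.dvd_or_dvd dvd).resolve_left fun h => ?_)
    exact hp.not_isUnit <| isUnit_of_dvd_unit h ((isUnit_iff_ne_zero.mpr (by norm_num)).map C)
  obtain ⟨q, hq⟩ : X 2 ∣ G20 :=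
    ((hp.dvd_comm (X_prime.irreducible)).mp dvd_X).trans (dvd_of_mul_left_dvd sq_dvd)
  exact ne_zero_at (by simp [hq])

lemma vertexForm_kleinA_kleinB : vertexForm kleinA kleinB = 0 := by
  refine (mul_eq_zero.mp (mul_pow_five_mul_vertexForm kleinB_sq_sub_kleinA_sq kleinA kleinB
    |>.trans ?_)).resolve_left (pow_ne_zero _ kleinA_mul_kleinB_ne_zero)
  ring

lemma apply_two_eq_zero_of_mem_hessianLocus {u v : Fin 3 → ℂ} {a b : ℂ} (ha : a ≠ 0) (hb : b ≠ 0)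
    (hu : u ∈ hessianLocus) (hv : v ∈ hessianLocus) (huv : a • u + b • v ∈ hessianLocus)
    (independent : LinearIndependent ℂ ![u, v]) : u 2 = 0 := by
  by_contra hu2
  obtain ⟨hu0, hu1⟩ := hu.resolve_right fun h => hu2 h.1
  have on_axis : v 0 = 0 ∧ v 1 = 0 := by
    rcases hv with hv | ⟨hv2, -⟩
    · exact hv
    · simpa [hessianLocus, hu0, hu1, hu2, hv2, ha, hb] using huv
  refine (LinearIndependent.pair_iff' fun h => hu2 (congr_fun h 2)).mp independent (v 2 / u 2) ?_
  ext i
  fin_cases i <;> simp [hu0, hu1, hu2, on_axis]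

lemma exists_eq_blockSum {A : Matrix (Fin 3) (Fin 3) ℂ} (unit : IsUnit A)
    (hA : ∀ v ∈ hessianLocus, A *ᵥ v ∈ hessianLocus) :
    ∃ B d, A = blockSum B d ∧ vertexForm (B 0 0) (B 1 0) = 0 := by
  have col_mem (j : Fin 3) : A.col j ∈ hessianLocus := by
    rw [← mulVec_single_one]
    refine hA _ ?_
    fin_cases j <;> simp [hessianLocus, vertexForm]
  have mix_mem : kleinA • A.col 0 + kleinB • A.col 1 ∈ hessianLocus := by
    have := hA ![kleinA, kleinB, 0] (.inr ⟨rfl, vertexForm_kleinA_kleinB⟩)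
    simpa [mulVec_eq_sum, Fin.sum_univ_three, col_def] using this
  have independent (j k : Fin 3) (hjk : j ≠ k) : LinearIndependent ℂ ![A.col j, A.col k] := by
    have h := (linearIndependent_cols_iff_isUnit.mpr unit).comp ![j, k]
      (by intro a b; fin_cases a <;> fin_cases b <;> simp [hjk, hjk.symm])
    have comp_eq : A.col ∘ ![j, k] = ![A.col j, A.col k] := by ext i; fin_cases i <;> rfl
    rwa [comp_eq] at h
  have ha : kleinA ≠ 0 := left_ne_zero_of_mul kleinA_mul_kleinB_ne_zero
  have hb : kleinB ≠ 0 := right_ne_zero_of_mul kleinA_mul_kleinB_ne_zero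
  have A20 : A 2 0 = 0 := apply_two_eq_zero_of_mem_hessianLocus ha hb (col_mem 0) (col_mem 1)
    mix_mem (independent 0 1 (by decide))
  have A21 : A 2 1 = 0 := apply_two_eq_zero_of_mem_hessianLocus hb ha (col_mem 1) (col_mem 0)
    (add_comm (kleinA • A.col 0) _ ▸ mix_mem) (independent 1 0 (by decide))
  have A22 : A 2 2 ≠ 0 := fun h => by
    refine ((isUnit_iff_isUnit_det A).mp unit).ne_zero (det_eq_zero_of_row_eq_zero 2 fun j => ?_)
    fin_cases j <;> assumption
  obtain ⟨A02, A12⟩ : A 0 2 = 0 ∧ A 1 2 = 0 := (col_mem 2).resolve_right fun h => A22 h.1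
  refine ⟨!![A 0 0, A 0 1; A 1 0, A 1 1], A 2 2, ?_, ?_⟩
  · ext i j
    fin_cases i <;> fin_cases j <;> simp [blockSum, A20, A21, A02, A12]
  · rcases col_mem 0 with ⟨A00, -⟩ | ⟨-, vertex⟩
    · simp_all [vertexForm]
    · exact vertex

end BlockForm

section NormalForm

lemma preserves_iff {F : MvPolynomial (Fin 3) ℂ} {A : GL (Fin 3) ℂ} :
    Preserves F A ↔ ∀ v, eval (A.1 *ᵥ v) F = 0 ↔ eval v F = 0 := by
  have bijective : Function.Bijective (A.1 *ᵥ ·) :=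
    ⟨mulVec_injective_of_isUnit A.isUnit, mulVec_surjective_iff_isUnit.mpr A.isUnit⟩
  rw [Preserves, ← Set.eq_preimage_iff_image_eq bijective, Set.ext_iff]
  exact forall_congr' fun v => iff_comm

lemma eval_blockSum_mulVec_G20 (B : Matrix (Fin 2) (Fin 2) ℂ) (d : ℂ) (v : Fin 3 → ℂ) :
    eval (blockSum B d *ᵥ v) G20 =
      (d * v 2) ^ 20 + faceForm ((B *ᵥ ![v 0, v 1]) 0) ((B *ᵥ ![v 0, v 1]) 1) := by
  rw [eval_G20, blockSum_mulVec]
  rfl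

lemma preserves_blockSum_one {A : GL (Fin 3) ℂ} {B : Matrix (Fin 2) (Fin 2) ℂ}
    (hB : B ∈ faceFormStabilizer) (hA : A.1 = blockSum B 1) : Preserves G20 A := by
  refine preserves_iff.mpr fun v => ?_
  have invariance : faceForm ((B *ᵥ ![v 0, v 1]) 0) ((B *ᵥ ![v 0, v 1]) 1) =
      faceForm (v 0) (v 1) := hB _
  rw [hA, eval_blockSum_mulVec_G20, invariance, one_mul, eval_G20]

lemma inv_smul_mem_faceFormStabilizer {B : Matrix (Fin 2) (Fin 2) ℂ} {c d : ℂ} (hd : d ≠ 0)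
    (h : linSubst (blockSum B d) G20 = C c * G20) : d⁻¹ • B ∈ faceFormStabilizer := by
  have equation (v : Fin 3 → ℂ) : (d * v 2) ^ 20 + faceForm ((B *ᵥ ![v 0, v 1]) 0)
      ((B *ᵥ ![v 0, v 1]) 1) = c * (v 2 ^ 20 + faceForm (v 0) (v 1)) := by
    rw [← eval_blockSum_mulVec_G20, ← eval_linSubst, h, eval_mul, eval_C, eval_G20]
  have scalar_eq : d ^ 20 = c := by simpa [faceForm] using equation ![0, 0, 1]
  refine mem_faceFormStabilizer.mpr fun x y => ?_
  have binary : faceForm (B 0 0 * x + B 0 1 * y) (B 1 0 * x + B 1 1 * y) =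
      d ^ 20 * faceForm x y := by
    simpa [scalar_eq, mulVec, dotProduct] using equation ![x, y, 0]
  simp only [Matrix.smul_apply, smul_eq_mul, mul_assoc, ← mul_add, faceForm_smul]
  rw [binary, inv_pow, inv_mul_cancel_left₀ (pow_ne_zero _ hd)]

lemma exists_eq_smul_blockSum {A : GL (Fin 3) ℂ} (hA : Preserves G20 A) :
    ∃ (d z : ℂ) (g : Matrix.SpecialLinearGroup (Fin 2) (ZMod 5)), d ≠ 0 ∧ z ^ 20 = 1 ∧
      A.1 = d • blockSum (z • (kleinRep g).1) 1 := by
  obtain ⟨c, hc⟩ := exists_linSubst_eq_C_mul squarefree_G20 A.1 fun v => (preserves_iff.mp hA v).mpr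
  have det_unit : IsUnit A.1.det := (isUnit_iff_isUnit_det _).mp A.isUnit
  have locus (v) (hv : v ∈ hessianLocus) : A.1 *ᵥ v ∈ hessianLocus :=
    (adjugate_hessianAt_G20_eq_zero_iff _).mp <|
      adjugate_hessianAt_mulVec_eq_zero det_unit hc <|
        (adjugate_hessianAt_G20_eq_zero_iff v).mpr hv
  obtain ⟨B, d, hBd, vertex⟩ := exists_eq_blockSum A.isUnit locus
  have hd : d ≠ 0 := by
    rw [hBd, det_blockSum] at det_unit
    exact right_ne_zero_of_mul det_unit.ne_zero
  obtain ⟨z, g, hz, hB⟩ := exists_eq_smul_kleinRep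
    (inv_smul_mem_faceFormStabilizer hd (hBd ▸ hc)) (by simp [vertexForm_smul, vertex])
  refine ⟨d, z, g, hd, hz, ?_⟩
  rw [← hB, hBd]
  ext i j
  fin_cases i <;> fin_cases j <;> simp [blockSum, hd]

end NormalForm

section GroupStructure

open Multiplicative (ofAdd)

/-- The homomorphism from the cyclic group of order `n` sending the generator `1` to `g`. -/
def zmodPowHom {G : Type*} [Group G] {n : ℕ} (g : G) (hg : g ^ n = 1) :
    Multiplicative (ZMod n) →* G :=
  AddMonoidHom.toMultiplicativeLeft <| ZMod.lift n
    ⟨zmultiplesHom (Additive G) (.ofMul g), by simpa using congr_arg Additive.ofMul hg⟩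

lemma zmodPowHom_ofAdd_one {G : Type*} [Group G] {n : ℕ} {g : G} (hg : g ^ n = 1) :
    zmodPowHom g hg (ofAdd 1) = g := by
  have := ZMod.lift_coe n ⟨zmultiplesHom (Additive G) (.ofMul g),
    by simpa using congr_arg Additive.ofMul hg⟩ 1
  simpa [zmodPowHom] using congr_arg Additive.toMul this

lemma eq_one_or_eq_ofAdd_one (e : Multiplicative (ZMod 2)) : e = 1 ∨ e = ofAdd 1 := by
  revert e; decide

lemma diagonalTorus_unitTwo_sq : diagonalTorus unitTwo ^ 2 = -1 := by
  decide

lemma kleinRep_neg_one : kleinRep (-1) = -1 := by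
  rw [← diagonalTorus_unitTwo_sq, map_pow, kleinRep_diagonalTorus_unitTwo, ← quarterTurn_sq, sq]

/-- Conjugation of `SL(2, 5)` by `diag(2, 1/2)`, as an action of `ℤ/2`. -/
def torusConj : Multiplicative (ZMod 2) →* MulAut SL(2, ZMod 5) :=
  zmodPowHom (MulAut.conj (diagonalTorus unitTwo)) <| by
    rw [← map_pow, diagonalTorus_unitTwo_sq]
    ext g : 1
    simp

/-- `kleinRep` as a homomorphism to `GL(2, ℂ)`. -/
def kleinGL : SL(2, ZMod 5) →* GL (Fin 2) ℂ :=
  SpecialLinearGroup.toGL.comp kleinRep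

/-- The involution `i ρ(diag(2, 1/2))`, where `ρ` is `kleinRep`. -/
def twistedTurn : GL (Fin 2) ℂ :=
  GeneralLinearGroup.scalar (Fin 2) (Units.mk0 Complex.I Complex.I_ne_zero) *
    kleinGL (diagonalTorus unitTwo)

lemma twistedTurn_sq : twistedTurn ^ 2 = 1 := by
  have commutes := GeneralLinearGroup.scalar_commute (Units.mk0 Complex.I Complex.I_ne_zero)
    (kleinGL (diagonalTorus unitTwo))
  ext : 1
  rw [twistedTurn, Commute.mul_pow commutes, ← map_pow, ← map_pow, diagonalTorus_unitTwo_sq]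
  simp [kleinGL, kleinRep_neg_one, diagonal_pow, ← diagonal_neg, Pi.pow_def]

lemma det_twistedTurn : twistedTurn.det = -1 := by
  ext
  simp [twistedTurn, kleinGL]

/-- The group generated by `ρ(SL(2, 5))` and `twistedTurn`, where `ρ` is `kleinRep`, presented as
a semidirect product. -/
def twistedKleinGL : SL(2, ZMod 5) ⋊[torusConj] Multiplicative (ZMod 2) →* GL (Fin 2) ℂ :=
  SemidirectProduct.lift kleinGL (zmodPowHom twistedTurn twistedTurn_sq) fun e => by
    rcases eq_one_or_eq_ofAdd_one e with rfl | rfl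
    · ext g : 1
      simp
    · ext g : 1
      have commutes := GeneralLinearGroup.scalar_commute (Units.mk0 Complex.I Complex.I_ne_zero)
        (kleinGL (diagonalTorus unitTwo * g * (diagonalTorus unitTwo)⁻¹))
      calc kleinGL (torusConj (ofAdd 1) g)
          = kleinGL (diagonalTorus unitTwo * g * (diagonalTorus unitTwo)⁻¹) := by
            rw [torusConj, zmodPowHom_ofAdd_one, MulAut.conj_apply]
        _ = twistedTurn * kleinGL g * twistedTurn⁻¹ := by
            rw [← mul_inv_eq_iff_eq_mul.mpr commutes, twistedTurn, map_mul, map_mul, map_inv]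
            group
        _ = MulAut.conj (zmodPowHom twistedTurn twistedTurn_sq (ofAdd 1)) (kleinGL g) := by
            rw [zmodPowHom_ofAdd_one, MulAut.conj_apply]

/-- The subgroup `μ₂₀ ρ(SL(2, 5))` of `GL(2, ℂ)`, where `ρ` is `kleinRep`, presented as the product
of the scalars `μ₅` with `twistedKleinGL`. -/
def scaledKleinGL :
    Multiplicative (ZMod 5) × (SL(2, ZMod 5) ⋊[torusConj] Multiplicative (ZMod 2)) →*
      GL (Fin 2) ℂ :=
  MonoidHom.noncommCoprod
    ((GeneralLinearGroup.scalar (Fin 2)).comp (ZMod.stdAddChar (N := 5)).toMonoidHom.toHomUnits)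
    twistedKleinGL fun _ _ => GeneralLinearGroup.scalar_commute _ _

lemma scaledKleinGL_apply (x : Multiplicative (ZMod 5) ×
    (SL(2, ZMod 5) ⋊[torusConj] Multiplicative (ZMod 2))) :
    scaledKleinGL x = GeneralLinearGroup.scalar (Fin 2)
      ((ZMod.stdAddChar (N := 5)).toMonoidHom.toHomUnits x.1) *
        (kleinGL x.2.left * zmodPowHom twistedTurn twistedTurn_sq x.2.right) :=
  rfl

lemma det_kleinGL (g : SL(2, ZMod 5)) : (kleinGL g).det = 1 := by
  ext
  simp [kleinGL]

lemma eq_zero_of_stdAddChar_sq_eq_one {t : ZMod 5} (h : ZMod.stdAddChar t ^ 2 = 1) : t = 0 := by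
  refine ZMod.injective_stdAddChar ?_
  calc ZMod.stdAddChar t = (ZMod.stdAddChar t ^ 2) ^ 2 * ZMod.stdAddChar t := by
        rw [h, one_pow, one_mul]
    _ = ZMod.stdAddChar t ^ 5 := by ring
    _ = ZMod.stdAddChar 0 := by rw [stdAddChar_pow_five, AddChar.map_zero_eq_one]

lemma stdAddChar_sq_ne_neg_one (t : ZMod 5) : ZMod.stdAddChar t ^ 2 ≠ -1 := fun h => by
  have : (1 : ℂ) = -1 :=
    calc (1 : ℂ) = (ZMod.stdAddChar t ^ 5) ^ 2 := by rw [stdAddChar_pow_five, one_pow]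
      _ = (ZMod.stdAddChar t ^ 2) ^ 5 := by ring
      _ = -1 := by rw [h]; norm_num
  norm_num at this

lemma scaledKleinGL_injective : Function.Injective scaledKleinGL := by
  rw [injective_iff_map_eq_one]
  rintro ⟨k, g, e⟩ h
  have det_eq : (scaledKleinGL (k, ⟨g, e⟩)).det.1 = 1 := by rw [h, map_one, Units.val_one]
  obtain rfl : e = 1 := by
    refine (eq_one_or_eq_ofAdd_one e).resolve_right ?_
    rintro rfl
    refine stdAddChar_sq_ne_neg_one k.toAdd ?_
    simpa [scaledKleinGL_apply, zmodPowHom_ofAdd_one, det_twistedTurn, det_kleinGL,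
      neg_eq_iff_eq_neg] using det_eq
  obtain rfl : k = 1 := by
    refine eq_zero_of_stdAddChar_sq_eq_one (t := k.toAdd) ?_
    simpa [scaledKleinGL_apply, det_kleinGL] using det_eq
  obtain rfl : g = 1 := by
    refine kleinRep_injective (SpecialLinearGroup.toGL_injective ?_)
    simpa [scaledKleinGL_apply, kleinGL] using h
  rfl

lemma coe_scalar_mul_kleinGL (z : ℂˣ) (g : SL(2, ZMod 5)) :
    (GeneralLinearGroup.scalar (Fin 2) z * kleinGL g).1 = (z : ℂ) • (kleinRep g).1 := by
  ext i j
  simp [kleinGL]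

lemma kleinGL_mem_range_scaledKleinGL (g : SL(2, ZMod 5)) : kleinGL g ∈ scaledKleinGL.range :=
  ⟨(1, ⟨g, 1⟩), by simp [scaledKleinGL_apply]⟩

lemma twistedTurn_mem_range_scaledKleinGL : twistedTurn ∈ scaledKleinGL.range :=
  ⟨(1, ⟨1, ofAdd 1⟩), by simp [scaledKleinGL_apply, zmodPowHom_ofAdd_one]⟩

lemma scalar_mem_range_scaledKleinGL {z : ℂˣ} (hz : (z : ℂ) ^ 20 = 1) :
    GeneralLinearGroup.scalar (Fin 2) z ∈ scaledKleinGL.range := by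
  have scalar_I_mem : GeneralLinearGroup.scalar (Fin 2) (.mk0 Complex.I Complex.I_ne_zero) ∈
      scaledKleinGL.range := by
    rw [← mul_inv_cancel_right (GeneralLinearGroup.scalar (Fin 2) _)
      (kleinGL (diagonalTorus unitTwo))]
    exact mul_mem twistedTurn_mem_range_scaledKleinGL
      (inv_mem (kleinGL_mem_range_scaledKleinGL _))
  obtain ⟨n, -, hn⟩ := Complex.isPrimitiveRoot_I.eq_pow_of_pow_eq_one (ξ := (z : ℂ) ^ 5)
    (by rw [← pow_mul, hz])
  obtain ⟨t, ht⟩ := exists_eq_stdAddChar_mul (x := (z : ℂ) ^ 16) (y := 1)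
    (by rw [one_pow, ← pow_mul, show 16 * 5 = 20 * 4 from rfl, pow_mul, hz, one_pow])
  have decomposition : z = (ZMod.stdAddChar (N := 5)).toMonoidHom.toHomUnits (ofAdd t) *
      (.mk0 Complex.I Complex.I_ne_zero) ^ n := by
    ext
    calc (z : ℂ) = z ^ 16 * z ^ 5 := by
          rw [← pow_add, pow_succ, hz, one_mul]
      _ = _ := by rw [← hn, ht, mul_one]; rfl
  rw [decomposition, map_mul, map_pow]
  refine mul_mem ⟨(ofAdd t, 1), ?_⟩ (pow_mem scalar_I_mem n)
  simp [scaledKleinGL_apply]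

lemma coe_scaledKleinGL_mem_faceFormStabilizer (x : Multiplicative (ZMod 5) ×
    (SL(2, ZMod 5) ⋊[torusConj] Multiplicative (ZMod 2))) :
    (scaledKleinGL x).1 ∈ faceFormStabilizer := by
  have turn_mem : (zmodPowHom twistedTurn twistedTurn_sq x.2.right).1 ∈ faceFormStabilizer := by
    rcases eq_one_or_eq_ofAdd_one x.2.right with h | h <;> rw [h]
    · exact one_mem _
    · rw [zmodPowHom_ofAdd_one, twistedTurn, coe_scalar_mul_kleinGL]
      refine smul_mem_faceFormStabilizer (kleinRep_mem_faceFormStabilizer _) ?_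
      rw [Units.val_mk0, Complex.I_pow_eq_pow_mod, pow_zero]
  rw [scaledKleinGL_apply, ← mul_assoc, Units.val_mul, coe_scalar_mul_kleinGL]
  refine mul_mem (smul_mem_faceFormStabilizer (kleinRep_mem_faceFormStabilizer _) ?_) turn_mem
  calc ZMod.stdAddChar x.1.toAdd ^ 20 = (ZMod.stdAddChar x.1.toAdd ^ 5) ^ 4 := by ring
    _ = 1 := by rw [stdAddChar_pow_five, one_pow]

/-- The homomorphism `B ↦ B ⊕ (1)`. -/
def blockSumOne {R : Type*} [CommRing R] :
    Matrix (Fin 2) (Fin 2) R →* Matrix (Fin 3) (Fin 3) R where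
  toFun B := blockSum B 1
  map_one' := by
    ext i j
    fin_cases i <;> fin_cases j <;> rfl
  map_mul' B B' := by rw [← blockSum_mul, one_mul]

/-- The homomorphism to `PGL(3, ℂ)` sending `B` to the class of `B ⊕ (1)`. -/
def blockPGL : GL (Fin 2) ℂ →* PGL3 :=
  (QuotientGroup.mk' scalarSub).comp (Units.map blockSumOne)

lemma blockPGL_injective : Function.Injective blockPGL := by
  rw [injective_iff_map_eq_one]
  intro B hB
  obtain ⟨c, hc⟩ := (QuotientGroup.eq_one_iff _).mp hB
  have entry (i j : Fin 3) : algebraMap ℂ (Matrix (Fin 3) (Fin 3) ℂ) c i j = blockSum B.1 1 i j :=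
    congr_arg (fun A : GL (Fin 3) ℂ => A.1 i j) hc
  have hc1 : c.1 = 1 := by simpa [algebraMap_matrix_apply, blockSum] using entry 2 2
  ext i j
  have := entry (Fin.castSucc i) (Fin.castSucc j)
  fin_cases i <;> fin_cases j <;> simpa [algebraMap_matrix_apply, blockSum, hc1] using this.symm

lemma range_blockPGL_comp_scaledKleinGL : (blockPGL.comp scaledKleinGL).range = Lin G20 := by
  refine le_antisymm ?_ ?_
  · rintro _ ⟨x, rfl⟩
    exact ⟨Units.map blockSumOne (scaledKleinGL x),
      preserves_blockSum_one (coe_scaledKleinGL_mem_faceFormStabilizer x) rfl, rfl⟩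
  · rintro _ ⟨A, hA, rfl⟩
    obtain ⟨d, z, g, hd, hz, eq⟩ := exists_eq_smul_blockSum hA
    lift z to ℂˣ using (IsUnit.of_pow_eq_one hz (by norm_num))
    obtain ⟨x, hx⟩ := mul_mem (scalar_mem_range_scaledKleinGL hz)
      (kleinGL_mem_range_scaledKleinGL g)
    refine ⟨x, QuotientGroup.mk'_eq_mk' _ |>.mpr ⟨_, ⟨.mk0 d hd, rfl⟩, ?_⟩⟩
    ext i j : 3
    rw [eq, ← coe_scalar_mul_kleinGL, ← hx, smul_eq_mul_diagonal]
    rfl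

/-- The group `Lin G20` is generated by the scalars `μ₅`, the binary icosahedral group and
`twistedTurn`, all acting on the first two coordinates. -/
def linG20Equiv :
    Multiplicative (ZMod 5) × (SL(2, ZMod 5) ⋊[torusConj] Multiplicative (ZMod 2)) ≃* Lin G20 :=
  (MonoidHom.ofInjective (f := blockPGL.comp scaledKleinGL)
    (blockPGL_injective.comp scaledKleinGL_injective)).trans
    (MulEquiv.subgroupCongr range_blockPGL_comp_scaledKleinGL)

lemma card_specialLinearGroup_zmod_five : Nat.card SL(2, ZMod 5) = 120 := by
  rw [Nat.card_eq_fintype_card]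
  decide +kernel

end GroupStructure

end BinaryIcosahedralGroup

theorem stmt7 :
    Nat.card (Lin G20) = 1200 ∧
    ∃ φ : Multiplicative (ZMod 2) →* MulAut (Matrix.SpecialLinearGroup (Fin 2) (ZMod 5)),
      Nonempty (Lin G20 ≃*
        Multiplicative (ZMod 5) ×
          (Matrix.SpecialLinearGroup (Fin 2) (ZMod 5) ⋊[φ] Multiplicative (ZMod 2))) := by
  refine ⟨?_, torusConj, ⟨linG20Equiv.symm⟩⟩
  calc Nat.card (Lin G20)
      = Nat.card (ZMod 5) * (Nat.card (Matrix.SpecialLinearGroup (Fin 2) (ZMod 5)) *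
          Nat.card (ZMod 2)) := by
        rw [← Nat.card_congr linG20Equiv.toEquiv, Nat.card_prod, SemidirectProduct.card]
        rfl
    _ = 1200 := by
        rw [card_specialLinearGroup_zmod_five, Nat.card_zmod, Nat.card_zmod]
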